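/- Let L be a lattice of rank at least 5 and J ⊆ L a rank-2 primitive totally isotropic sublattice. Define W(J)_ℚ = {γ ∈ O(L_ℚ) : γ(x) = x for all x ∈ J_ℚ, and γ(v) − v ∈ J_ℚ for all v ∈ J_ℚ^⊥} and U(J)_ℚ = {γ ∈ O(L_ℚ) : γ(v) = v for all v ∈ J_ℚ^⊥}. Then U(J)_ℚ is a subgroup of W(J)_ℚ and is exactly the center of W(J)_ℚ. (This is part of the paper's lemma that W(J)_ℚ is the Heisenberg group attached to L(J)_ℚ ⊗ J_ℚ with center U(J)_ℚ ≅ ∧²J_ℚ, stated in the paper for L of signature (2,b) with b ≥ 3.) -/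

import Mathlib

/-!
Let `P = J_ℚ`, spanned by `j₁, j₂`. Nondegeneracy gives `k₁, k₂` dual to `j₁, j₂`, whence
`P^⊥⊥ = P` (`mem_span_of_orthogonal`).

*`U(J)_ℚ` is central.* An isometry that is the identity on `P^⊥` moves every vector by an element of
`P^⊥⊥ = P`, and an isometry that is the identity on `P` moves every vector by an element of `P^⊥`.
So for `γ ∈ U(J)_ℚ` and `δ ∈ W(J)_ℚ`, both `γ δ v` and `δ γ v` equal `γ v + δ v - v`.

*The center lies in `U(J)_ℚ`.* For `m ∈ P^⊥` and `l ∈ P` the Eichler transvection `E_{m,l}` lies in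
`W(J)_ℚ`. If `γ ∈ W(J)_ℚ` commutes with it, comparing both composites at `u` gives
`(l,u) • (γ m - m) = (m, u - γ u) • l`. Taking `l = jᵢ` and `u = kᵢ` shows `γ m - m ∈ ℚ j₁ ∩ ℚ j₂ = 0`.
-/

noncomputable section

open LinearMap (BilinForm)

variable {V : Type*} [AddCommGroup V] [Module ℚ V]

/-- The Eichler transvection `E_{m,l}` as a linear endomorphism of `V`:
`E_{m,l}(v) = v - (m,v)•l + (l,v)•m - (1/2)(m,m)(l,v)•l`. -/
def eichler (B : BilinForm ℚ V) (m l : V) : V →ₗ[ℚ] V where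
  toFun u := u - B m u • l + B l u • m - ((1 / 2 : ℚ) * B m m * B l u) • l
  map_add' x y := by
    simp only [map_add, LinearMap.add_apply]
    module
  map_smul' a x := by
    simp only [map_smul, LinearMap.smul_apply, smul_eq_mul, RingHom.id_apply]
    module

/-- `l` is a primitive vector of the lattice `L`. -/
def IsPrimitiveIn (L : Submodule ℤ V) (l : V) : Prop :=
  l ∈ L ∧ ∀ (k : ℤ) (u : V), u ∈ L → l = k • u → k = 1 ∨ k = -1

/-- `I = ℤl` is an irregular 0-dimensional cusp for the group of isometries `S`:
`-id ∉ S` and `-E_{m,l} ∈ S` for some `m ⊥ l`. -/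
def IsIrregular (B : BilinForm ℚ V) (S : Set (V ≃ₗ[ℚ] V)) (l : V) : Prop :=
  LinearEquiv.neg ℚ ∉ S ∧
    ∃ m : V, B m l = 0 ∧ ∃ γ ∈ S, (γ : V →ₗ[ℚ] V) = -(eichler B m l)

/-- Membership in `W(J)_ℚ = {γ ∈ O(L_ℚ) : γ|_{J_ℚ} = id, γ(v) - v ∈ J_ℚ for v ∈ J_ℚ^⊥}`. -/
def MemWJ (B : BilinForm ℚ V) (J : Submodule ℤ V) (γ : V ≃ₗ[ℚ] V) : Prop :=
  (∀ v w : V, B (γ v) (γ w) = B v w) ∧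
  (∀ x ∈ Submodule.span ℚ (J : Set V), γ x = x) ∧
  (∀ v : V, (∀ x ∈ J, B v x = 0) → γ v - v ∈ Submodule.span ℚ (J : Set V))

/-- Membership in `U(J)_ℚ = {γ ∈ O(L_ℚ) : γ fixes J_ℚ^⊥ pointwise}`. -/
def MemUJ (B : BilinForm ℚ V) (J : Submodule ℤ V) (γ : V ≃ₗ[ℚ] V) : Prop :=
  (∀ v w : V, B (γ v) (γ w) = B v w) ∧
    ∀ v : V, (∀ x ∈ J, B v x = 0) → γ v = v

/-- The orthogonal complement of `J_ℚ` is cut out by the two generators. -/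
lemma orthogonal_iff (B : BilinForm ℚ V) (j₁ j₂ : V) (v : V) :
    (∀ x ∈ Submodule.span ℤ ({j₁, j₂} : Set V), B v x = 0) ↔ B v j₁ = 0 ∧ B v j₂ = 0 := by
  constructor
  · intro h
    exact ⟨h _ (Submodule.subset_span (by simp)), h _ (Submodule.subset_span (by simp))⟩
  · rintro ⟨h1, h2⟩ x hx
    obtain ⟨a, b, rfl⟩ := Submodule.mem_span_pair.1 hx
    simp [h1, h2]

lemma mem_span_iff (j₁ j₂ x : V) :
    x ∈ Submodule.span ℚ ((Submodule.span ℤ ({j₁, j₂} : Set V) : Submodule ℤ V) : Set V) ↔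
      ∃ a b : ℚ, a • j₁ + b • j₂ = x := by
  rw [Submodule.span_span_of_tower, Submodule.mem_span_pair]

lemma exists_dual_pair [FiniteDimensional ℚ V] (B : BilinForm ℚ V)
    (hnd : LinearMap.BilinForm.Nondegenerate B) (j₁ j₂ : V)
    (hind : LinearIndependent ℚ ![j₁, j₂]) :
    ∃ k₁ k₂ : V, B k₁ j₁ = 1 ∧ B k₁ j₂ = 0 ∧ B k₂ j₁ = 0 ∧ B k₂ j₂ = 1 := by
  obtain ⟨g, hg⟩ := LinearMap.exists_leftInverse_of_injective _ (LinearMap.ker_eq_bot.2 hind)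
  have hgi (i : Fin 2) : g (![j₁, j₂] i) = Finsupp.single i 1 := by
    simpa using LinearMap.congr_fun hg (Finsupp.single i 1)
  have h1 : g j₁ = Finsupp.single 0 1 := hgi 0
  have h2 : g j₂ = Finsupp.single 1 1 := hgi 1
  refine ⟨(B.toDual hnd).symm (Finsupp.lapply 0 ∘ₗ g), (B.toDual hnd).symm (Finsupp.lapply 1 ∘ₗ g),
    ?_, ?_, ?_, ?_⟩ <;>
  simp [LinearMap.BilinForm.apply_toDual_symm_apply, h1, h2]

/-- `P^⊥⊥ ⊆ P` for the span `P` of `j₁, j₂`: subtracting `(p,k₁) j₁ + (p,k₂) j₂` from `p ∈ P^⊥⊥`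
leaves a vector orthogonal to `P^⊥`, `k₁` and `k₂`, which together span `V`. -/
lemma mem_span_of_orthogonal (B : BilinForm ℚ V) (hsymm : ∀ x y : V, B x y = B y x)
    (hnd : LinearMap.BilinForm.Nondegenerate B) {j₁ j₂ k₁ k₂ : V}
    (h11 : B k₁ j₁ = 1) (h12 : B k₁ j₂ = 0) (h21 : B k₂ j₁ = 0) (h22 : B k₂ j₂ = 1)
    (p : V) (hp : ∀ w, B w j₁ = 0 → B w j₂ = 0 → B p w = 0) :
    ∃ a b : ℚ, a • j₁ + b • j₂ = p := by
  refine ⟨B p k₁, B p k₂, ?_⟩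
  rw [← sub_eq_zero]
  refine hnd.1 _ fun v => ?_
  have h := hp (v - B v j₁ • k₁ - B v j₂ • k₂) (by simp [h11, h21]) (by simp [h12, h22])
  simp only [map_sub, map_add, map_smul, LinearMap.sub_apply, LinearMap.add_apply,
    LinearMap.smul_apply, smul_eq_mul] at h ⊢
  rw [hsymm j₁ v, hsymm j₂ v]
  linarith

lemma eichler_isometry (B : BilinForm ℚ V) (hsymm : ∀ x y : V, B x y = B y x) {m l : V}
    (hml : B m l = 0) (hll : B l l = 0) (v w : V) :
    B (eichler B m l v) (eichler B m l w) = B v w := by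
  simp only [eichler, LinearMap.coe_mk, AddHom.coe_mk, map_sub, map_add, map_smul,
    LinearMap.sub_apply, LinearMap.add_apply, LinearMap.smul_apply, smul_eq_mul, hml, hll,
    hsymm l m, hsymm v l, hsymm v m]
  ring

/-- The transvection `E_{m,l}` as an automorphism of `V`: an isometry of a nondegenerate form is
injective, hence bijective in finite dimension. -/
lemma exists_eichler_equiv [FiniteDimensional ℚ V] (B : BilinForm ℚ V)
    (hsymm : ∀ x y : V, B x y = B y x) (hnd : LinearMap.BilinForm.Nondegenerate B) {m l : V}
    (hml : B m l = 0) (hll : B l l = 0) :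
    ∃ δ : V ≃ₗ[ℚ] V, ∀ v, δ v = eichler B m l v := by
  have hinj : Function.Injective (eichler B m l) := by
    rw [injective_iff_map_eq_zero]
    intro v hv
    refine hnd.1 _ fun w => ?_
    rw [← eichler_isometry B hsymm hml hll, hv]
    simp
  exact ⟨LinearEquiv.ofInjectiveEndo _ hinj, fun v => by simp⟩

/-- An element of `W(J)_ℚ` commuting with `E_{m,l}` moves `m` by a multiple of `l`, provided some
`u` pairs to `1` with `l`. -/
lemma exists_smul_of_commute [FiniteDimensional ℚ V] (B : BilinForm ℚ V)
    (hsymm : ∀ x y : V, B x y = B y x) (hnd : LinearMap.BilinForm.Nondegenerate B)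
    {J : Submodule ℤ V} (hJiso : ∀ x ∈ J, ∀ y ∈ J, B x y = 0)
    {γ : V ≃ₗ[ℚ] V} (hγ : MemWJ B J γ)
    (hc : ∀ δ : V ≃ₗ[ℚ] V, MemWJ B J δ → γ * δ = δ * γ)
    {m l u : V} (hm : ∀ x ∈ J, B m x = 0) (hl : l ∈ J) (hu : B u l = 1) :
    ∃ c : ℚ, γ m - m = c • l := by
  have hll : B l l = 0 := hJiso l hl l hl
  obtain ⟨δ, hδ⟩ := exists_eichler_equiv B hsymm hnd (hm l hl) hll
  have hspan : ∀ v, (∀ y ∈ J, B v y = 0) → ∀ x ∈ Submodule.span ℚ (J : Set V), B v x = 0 := by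
    intro v hv x hx
    have : Submodule.span ℚ (J : Set V) ≤ LinearMap.ker (B v) :=
      Submodule.span_le.2 fun y hy => hv y hy
    exact this hx
  have hlQ : l ∈ Submodule.span ℚ (J : Set V) := Submodule.subset_span hl
  have hδW : MemWJ B J δ := by
    refine ⟨fun v w => ?_, fun x hx => ?_, fun v hv => ?_⟩
    · rw [hδ, hδ, eichler_isometry B hsymm (hm l hl) hll]
    · simp [hδ, eichler, hspan m hm x hx, hspan l (hJiso l hl) x hx]
    · have h : δ v - v = (-B m v) • l := by
        rw [hδ]
        simp only [eichler, LinearMap.coe_mk, AddHom.coe_mk, hsymm l v, hv l hl]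
        module
      rw [h]
      exact Submodule.smul_mem _ _ hlQ
  have h := LinearEquiv.congr_fun (hc δ hδW) u
  have hγl : γ l = l := hγ.2.1 l hlQ
  have hlu : B l u = 1 := by rw [hsymm, hu]
  have hlγ : B l (γ u) = 1 := by
    have := hγ.1 l u
    rwa [hγl, hlu] at this
  simp only [LinearEquiv.mul_apply, hδ, eichler, LinearMap.coe_mk, AddHom.coe_mk, map_sub,
    map_add, map_smul, hγl, hlu, hlγ] at h
  refine ⟨B m u - B m (γ u), ?_⟩
  rw [← sub_eq_zero] at h ⊢
  rw [← h]
  module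

/-- for a lattice of rank ≥ 5 and a rank-2 primitive totally isotropic
`J ⊆ L`, the group `U(J)_ℚ` is a subgroup of `W(J)_ℚ` and is exactly its center. -/
theorem statement18 (B : BilinForm ℚ V) [FiniteDimensional ℚ V]
    (hsymm : ∀ x y : V, B x y = B y x)
    (hnd : LinearMap.BilinForm.Nondegenerate B)
    (L : Submodule ℤ V) (hfg : L.FG)
    (hspan : Submodule.span ℚ (L : Set V) = ⊤)
    (hint : ∀ x ∈ L, ∀ y ∈ L, ∃ n : ℤ, B x y = (n : ℚ))
    (hrank : 5 ≤ Module.finrank ℚ V)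
    (j₁ j₂ : V) (J : Submodule ℤ V)
    (hJ : J = Submodule.span ℤ ({j₁, j₂} : Set V))
    (hind : LinearIndependent ℚ ![j₁, j₂])
    (hJL : J ≤ L)
    (hJiso : ∀ x ∈ J, ∀ y ∈ J, B x y = 0)
    (hJprim : ∀ x ∈ L, ∀ n : ℤ, n ≠ 0 → n • x ∈ J → x ∈ J) :
    -- `U(J)_ℚ` is a subgroup of `W(J)_ℚ`:
    (∀ γ : V ≃ₗ[ℚ] V, MemUJ B J γ → MemWJ B J γ) ∧
    MemUJ B J (1 : V ≃ₗ[ℚ] V) ∧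
    (∀ γ δ : V ≃ₗ[ℚ] V, MemUJ B J γ → MemUJ B J δ → MemUJ B J (γ * δ)) ∧
    (∀ γ : V ≃ₗ[ℚ] V, MemUJ B J γ → MemUJ B J γ⁻¹) ∧
    -- `U(J)_ℚ` is central in `W(J)_ℚ`:
    (∀ γ : V ≃ₗ[ℚ] V, MemUJ B J γ → ∀ δ : V ≃ₗ[ℚ] V, MemWJ B J δ → γ * δ = δ * γ) ∧
    -- and any central element of `W(J)_ℚ` lies in `U(J)_ℚ`:
    (∀ γ : V ≃ₗ[ℚ] V, MemWJ B J γ →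
      (∀ δ : V ≃ₗ[ℚ] V, MemWJ B J δ → γ * δ = δ * γ) → MemUJ B J γ) := by
  subst hJ
  obtain ⟨k₁, k₂, h11, h12, h21, h22⟩ := exists_dual_pair B hnd j₁ j₂ hind
  have hj₁ : j₁ ∈ Submodule.span ℤ ({j₁, j₂} : Set V) := Submodule.subset_span (by simp)
  have hj₂ : j₂ ∈ Submodule.span ℤ ({j₁, j₂} : Set V) := Submodule.subset_span (by simp)
  have hUW : ∀ γ : V ≃ₗ[ℚ] V, MemUJ B (Submodule.span ℤ {j₁, j₂}) γ →
      MemWJ B (Submodule.span ℤ {j₁, j₂}) γ := by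
    intro γ hγ
    refine ⟨hγ.1, fun x hx => ?_, fun v hv => ?_⟩
    · obtain ⟨a, b, rfl⟩ := (mem_span_iff _ _ _).1 hx
      rw [map_add, map_smul, map_smul, hγ.2 j₁ (hJiso j₁ hj₁), hγ.2 j₂ (hJiso j₂ hj₂)]
    · rw [hγ.2 v hv, sub_self]
      exact Submodule.zero_mem _
  refine ⟨hUW, ⟨fun _ _ => rfl, fun _ _ => rfl⟩, ?_, ?_, ?_, ?_⟩
  · intro γ δ hγ hδ
    refine ⟨fun v w => ?_, fun v hv => ?_⟩
    · rw [LinearEquiv.mul_apply, LinearEquiv.mul_apply, hγ.1, hδ.1]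
    · rw [LinearEquiv.mul_apply, hδ.2 v hv, hγ.2 v hv]
  · intro γ hγ
    have hinv (v : V) : γ (γ⁻¹ v) = v := γ.apply_symm_apply v
    refine ⟨fun v w => ?_, fun v hv => γ.injective ?_⟩
    · rw [← hγ.1, hinv, hinv]
    · rw [hinv, hγ.2 v hv]
  · intro γ hγ δ hδ
    ext v
    have hγv : γ v - v ∈ Submodule.span ℚ
        ((Submodule.span ℤ ({j₁, j₂} : Set V) : Submodule ℤ V) : Set V) := by
      refine (mem_span_iff _ _ _).2
        (mem_span_of_orthogonal B hsymm hnd h11 h12 h21 h22 _ fun w hw1 hw2 => ?_)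
      have h := hγ.1 v w
      rw [hγ.2 w ((orthogonal_iff B j₁ j₂ w).2 ⟨hw1, hw2⟩)] at h
      rw [map_sub, LinearMap.sub_apply, h, sub_self]
    have hδv : ∀ x ∈ Submodule.span ℤ ({j₁, j₂} : Set V), B (δ v - v) x = 0 := by
      intro x hx
      have h := hδ.1 v x
      rw [hδ.2.1 x (Submodule.subset_span hx)] at h
      rw [map_sub, LinearMap.sub_apply, h, sub_self]
    have e1 := hδ.2.1 _ hγv
    have e2 := hγ.2 _ hδv
    rw [map_sub] at e1 e2
    rw [LinearEquiv.mul_apply, LinearEquiv.mul_apply, sub_eq_iff_eq_add.1 e1,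
      sub_eq_iff_eq_add.1 e2]
    abel
  · intro γ hγ hc
    refine ⟨hγ.1, fun m hm => ?_⟩
    obtain ⟨c, hc1⟩ := exists_smul_of_commute B hsymm hnd hJiso hγ hc hm hj₁ h11
    obtain ⟨d, hd⟩ := exists_smul_of_commute B hsymm hnd hJiso hγ hc hm hj₂ h22
    -- Pairing `c • j₁ = d • j₂` with `k₁` gives `c = 0`.
    have h := congrArg (B k₁) (hc1.symm.trans hd)
    simp only [map_smul, h11, h12, smul_eq_mul, mul_one, mul_zero] at h
    rw [h, zero_smul] at hc1
    exact sub_eq_zero.1 hc1
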